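/- Let (Ω,Σ,μ) be a probability space and φ : Ω → Ω a measure-preserving measurable transformation with Perron–Frobenius operator P on L¹(Ω,Σ,μ). Then for every A ∈ Σ and every m ∈ ℕ₀, the function Pᵐ(1_A) vanishes μ-almost everywhere on the set { E(1_A | Σ_inv) = 0 }; equivalently, {Pᵐ 1_A > 0} ⊆ {E(1_A | Σ_inv) > 0} up to a μ-null set. -/

import Mathlib

open MeasureTheory Filter Set Topology
open scoped symmDiff ENNReal

/-- The σ-algebra of `φ`-invariant measurable sets. -/
def invAlg {Ω : Type*} (m : MeasurableSpace Ω) (φ : Ω → Ω) : MeasurableSpace Ω where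
  MeasurableSet' A := m.MeasurableSet' A ∧ φ ⁻¹' A = A
  measurableSet_empty := ⟨m.measurableSet_empty, rfl⟩
  measurableSet_compl A hA := ⟨m.measurableSet_compl A hA.1, by
    rw [Set.preimage_compl, hA.2]⟩
  measurableSet_iUnion s hs := ⟨m.measurableSet_iUnion s fun i => (hs i).1, by
    simp only [Set.preimage_iUnion]
    exact Set.iUnion_congr fun i => (hs i).2⟩

/-! The zero set `Z` of the conditional expectation of `|f|` given the invariant sets is itself
invariant, and `f` vanishes on it because `∫_Z |f| = ∫_Z E(|f| | Σ_inv) = 0`. Vanishing on an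
invariant set is preserved by `P`: for every measurable `B`,
`∫_{B ∩ Z} P f = ∫_{φ⁻¹ B ∩ Z} f = 0`. -/

/-- The defining identity of the Perron–Frobenius operator of `φ` on `L¹(μ)`. For complete `E`
it determines `P f`, so `P` is a bare map: its linearity and boundedness need not be recorded. -/
def IsPerronFrobenius {Ω E : Type*} [MeasurableSpace Ω] [NormedAddCommGroup E] [NormedSpace ℝ E]
    (μ : Measure Ω) (φ : Ω → Ω) (P : Lp E 1 μ → Lp E 1 μ) : Prop :=
  ∀ (f : Lp E 1 μ) (A : Set Ω), MeasurableSet A →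
    ∫ x in A, P f x ∂μ = ∫ x in φ ⁻¹' A, f x ∂μ

theorem invAlg_le {Ω : Type*} (m : MeasurableSpace Ω) (φ : Ω → Ω) : invAlg m φ ≤ m :=
  fun _ hA => hA.1

theorem measurableSet_condExp_eq_zero {Ω : Type*} {m _ : MeasurableSpace Ω} (μ : Measure Ω)
    (f : Ω → ℝ) : MeasurableSet[m] {x | (μ[f|m]) x = 0} :=
  stronglyMeasurable_condExp.measurable (measurableSet_singleton 0)

theorem ae_eq_zero_restrict_condExp_eq_zero {Ω : Type*} {m m₀ : MeasurableSpace Ω}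
    {μ : Measure Ω} (hm : m ≤ m₀) [SigmaFinite (μ.trim hm)] {f : Ω → ℝ} (hf : Integrable f μ)
    (hf₀ : 0 ≤ᵐ[μ] f) : f =ᵐ[μ.restrict {x | (μ[f|m]) x = 0}] 0 := by
  rw [← setIntegral_eq_zero_iff_of_nonneg_ae (ae_restrict_of_ae hf₀) hf.integrableOn,
    ← setIntegral_condExp hm hf (measurableSet_condExp_eq_zero μ f)]
  exact setIntegral_eq_zero_of_forall_eq_zero fun _ hx => hx

section PerronFrobenius

variable {Ω E : Type*} [m : MeasurableSpace Ω] {μ : Measure Ω} [NormedAddCommGroup E]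
  [NormedSpace ℝ E] [CompleteSpace E] {φ : Ω → Ω} {P : Lp E 1 μ → Lp E 1 μ}

theorem IsPerronFrobenius.ae_eq_zero_restrict (hP : IsPerronFrobenius μ φ P) {Z : Set Ω}
    (hZ : MeasurableSet[invAlg m φ] Z) {f : Lp E 1 μ} (hf : f =ᵐ[μ.restrict Z] 0) :
    P f =ᵐ[μ.restrict Z] 0 := by
  obtain ⟨hZm, hZφ⟩ : MeasurableSet Z ∧ φ ⁻¹' Z = Z := hZ
  refine (L1.integrable_coeFn (P f)).restrict.ae_eq_zero_of_forall_setIntegral_eq_zero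
    fun B hB _ => ?_
  calc
    ∫ x in B, P f x ∂μ.restrict Z = ∫ x in B ∩ Z, P f x ∂μ := by rw [Measure.restrict_restrict hB]
    _ = ∫ x in φ ⁻¹' B ∩ Z, f x ∂μ := by rw [hP f _ (hB.inter hZm), preimage_inter, hZφ]
    _ = ∫ x in φ ⁻¹' B, f x ∂μ.restrict Z := by rw [Measure.restrict_restrict' hZm]
    _ = 0 := integral_eq_zero_of_ae (ae_restrict_of_ae hf)

theorem IsPerronFrobenius.iterate_ae_eq_zero_restrict (hP : IsPerronFrobenius μ φ P) {Z : Set Ω}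
    (hZ : MeasurableSet[invAlg m φ] Z) {f : Lp E 1 μ} (hf : f =ᵐ[μ.restrict Z] 0) (k : ℕ) :
    P^[k] f =ᵐ[μ.restrict Z] 0 := by
  induction k with
  | zero => exact hf
  | succ k ih =>
    rw [Function.iterate_succ_apply']
    exact hP.ae_eq_zero_restrict hZ ih

theorem stmt9_general [SigmaFinite (μ.trim (invAlg_le m φ))] (hP : IsPerronFrobenius μ φ P)
    {f : Ω → E} (hf : MemLp f 1 μ) (k : ℕ) :
    ∀ᵐ x ∂μ, (μ[fun x => ‖f x‖|invAlg m φ]) x = 0 → P^[k] (hf.toLp f) x = 0 := by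
  set Z := {x | (μ[fun x => ‖f x‖|invAlg m φ]) x = 0}
  have hZ : MeasurableSet[invAlg m φ] Z := measurableSet_condExp_eq_zero μ _
  have norm_zero : (fun x => ‖f x‖) =ᵐ[μ.restrict Z] 0 :=
    ae_eq_zero_restrict_condExp_eq_zero (invAlg_le m φ) (memLp_one_iff_integrable.mp hf.norm)
      (ae_of_all _ fun x => norm_nonneg (f x))
  have toLp_zero : hf.toLp f =ᵐ[μ.restrict Z] 0 := by
    filter_upwards [norm_zero, ae_restrict_of_ae hf.coeFn_toLp] with x hx hfx
    exact hfx.trans (norm_eq_zero.mp hx)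
  exact (ae_restrict_iff' (invAlg_le m φ _ hZ)).mp (hP.iterate_ae_eq_zero_restrict hZ toLp_zero k)

end PerronFrobenius

theorem stmt9 {Ω : Type*} [m : MeasurableSpace Ω] (μ : Measure Ω) [IsProbabilityMeasure μ]
    (φ : Ω → Ω) (hmp : MeasurePreserving φ μ μ)
    (P : Lp ℝ 1 μ →L[ℝ] Lp ℝ 1 μ)
    (hP : ∀ (f : Lp ℝ 1 μ) (A : Set Ω), MeasurableSet A →
      ∫ x in A, (P f) x ∂μ = ∫ x in φ ⁻¹' A, f x ∂μ)
    (A : Set Ω) (hA : MeasurableSet A) (k : ℕ) :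
    ∀ᵐ x ∂μ, (μ[A.indicator (fun _ => (1 : ℝ))|invAlg m φ]) x = 0 →
      ((P ^ k) (indicatorConstLp 1 hA (measure_ne_top μ A) (1 : ℝ))) x = 0 := by
  simpa only [norm_indicator_eq_indicator_norm, norm_one, FunLike.coe_pow_eq_iterate,
    indicatorConstLp] using
    stmt9_general (P := P) hP (memLp_indicator_const 1 hA (1 : ℝ) (.inr (measure_ne_top μ A))) k
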